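/- arXiv:1504.06705 — 10 statements merged into one kernel-verified Lean document; each statement's English description precedes it below -/
import Mathlib

section
/- Let α be the unique real root of the polynomial 54675·a⁴ − 2442195·a³ + 2182800·a² − 115424·a − 96429 lying in the interval (0.78, 0.79). Then for every real number a with 0 ≤ a < α, there exists x ∈ [0,π] such that 2a·sin(x) + a·sin(2x) + (4/3)·sin(3x) + sin(4x) + (6/5)·sin(5x) < 0. -/
open Real

theorem theorem1_sharpness
    (α : ℝ) (hα : α ∈ Set.Ioo (0.78 : ℝ) 0.79)
    (hroot : 54675 * α ^ 4 - 2442195 * α ^ 3 + 2182800 * α ^ 2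
      - 115424 * α - 96429 = 0)
    (a : ℝ) (ha0 : 0 ≤ a) (ha : a < α) :
    ∃ x ∈ Set.Icc 0 Real.pi,
      2 * a * Real.sin x + a * Real.sin (2 * x) + (4 / 3) * Real.sin (3 * x)
        + Real.sin (4 * x) + (6 / 5) * Real.sin (5 * x) < 0 := by
  obtain ⟨h1, h2⟩ := hα
  norm_num at h1 h2
  obtain ⟨A, hA⟩ : ∃ A, A = 19440 * α ^ 2 + 42186 * α - 35580 := ⟨_, rfl⟩
  obtain ⟨B, hB⟩ : ∃ B, B = -25245 * α ^ 2 + 9804 * α + 11743 := ⟨_, rfl⟩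
  have hA0 : 0 < A := by rw [hA]; nlinarith
  have hB0 : 0 < B := by rw [hB]; nlinarith
  have hBA : B < A := by rw [hA, hB]; nlinarith
  obtain ⟨c, hc⟩ : ∃ c, c = B / A := ⟨_, rfl⟩
  have hc0 : 0 < c := by rw [hc]; positivity
  have hc1 : c < 1 := by rw [hc, div_lt_one hA0]; exact hBA
  have hBc : B = c * A := by rw [hc]; field_simp
  have key : 144 * c ^ 4 + 60 * c ^ 3 - 68 * c ^ 2 + (15 * α - 30) * c + (15 * α - 1) = 0 := by
    have h : A ^ 4 * (144 * c ^ 4 + 60 * c ^ 3 - 68 * c ^ 2 + (15 * α - 30) * c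
        + (15 * α - 1)) = 0 := by
      have e : A ^ 4 * (144 * c ^ 4 + 60 * c ^ 3 - 68 * c ^ 2 + (15 * α - 30) * c
        + (15 * α - 1)) = 144 * B ^ 4 + 60 * B ^ 3 * A - 68 * B ^ 2 * A ^ 2
          + (15 * α - 30) * B * A ^ 3 + (15 * α - 1) * A ^ 4 := by
        rw [hBc]; ring
      rw [e, hA, hB]
      linear_combination (-17378711351136 + 88991936119224 * α - 68803940842560 * α ^ 2
        - 39397239234360 * α ^ 3 + 32107956735600 * α ^ 4 - 11700205056000 * α ^ 5) * hroot
    rcases mul_eq_zero.mp h with h | h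
    · exact absurd h (by positivity)
    · exact h
  refine ⟨Real.arccos c, ⟨Real.arccos_nonneg c, Real.arccos_le_pi c⟩, ?_⟩
  have hcos : Real.cos (Real.arccos c) = c := Real.cos_arccos (by linarith) hc1.le
  have hsin : 0 < Real.sin (Real.arccos c) := by
    apply Real.sin_pos_of_pos_of_lt_pi
    · exact Real.arccos_pos.mpr hc1
    · exact lt_of_le_of_lt (Real.arccos_le_pi_div_two.mpr hc0.le) (by linarith [Real.pi_pos])
  generalize Real.arccos c = x at hcos hsin ⊢
  have hs2 : Real.sin x ^ 2 = 1 - c ^ 2 := by rw [Real.sin_sq, hcos]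
  have s2 : Real.sin (2 * x) = Real.sin x * (2 * c) := by
    rw [Real.sin_two_mul, hcos]; ring
  have c2 : Real.cos (2 * x) = 2 * c ^ 2 - 1 := by rw [Real.cos_two_mul, hcos]
  have s3 : Real.sin (3 * x) = Real.sin x * (4 * c ^ 2 - 1) := by
    rw [show 3 * x = 2 * x + x by ring, Real.sin_add, s2, c2, hcos]; ring
  have c3 : Real.cos (3 * x) = 4 * c ^ 3 - 3 * c := by
    rw [Real.cos_three_mul, hcos]
  have s4 : Real.sin (4 * x) = Real.sin x * (8 * c ^ 3 - 4 * c) := by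
    rw [show 4 * x = 2 * (2 * x) by ring, Real.sin_two_mul, s2, c2]; ring
  have s5 : Real.sin (5 * x) = Real.sin x * (16 * c ^ 4 - 12 * c ^ 2 + 1) := by
    rw [show 5 * x = 3 * x + 2 * x by ring, Real.sin_add, s2, c2, s3, c3]; ring
  rw [s2, s3, s4, s5]
  have e : 2 * a * Real.sin x + a * (Real.sin x * (2 * c))
      + (4 / 3) * (Real.sin x * (4 * c ^ 2 - 1)) + Real.sin x * (8 * c ^ 3 - 4 * c)
      + (6 / 5) * (Real.sin x * (16 * c ^ 4 - 12 * c ^ 2 + 1))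
      = -(Real.sin x * (2 * (α - a) * (1 + c))) := by
    linear_combination (2 / 15 * Real.sin x) * key
  rw [e]
  have : 0 < α - a := by linarith
  have : 0 < Real.sin x * (2 * (α - a) * (1 + c)) := by positivity
  linarith
end

section
/- Let σ be the unique zero of the function f(z) = sin(z) − z·cos(z) in the interval (π, 3π/2) (numerically σ ≈ 4.493409458). Then for every real number k > 1 and every x ∈ [0, σ/k], one has sin((k−1)x) − ((k−1)/k)·sin(kx) ≥ 0. -/
open Real

lemma aux_hasDeriv (z : ℝ) :
    HasDerivAt (fun z : ℝ => Real.sin z - z * Real.cos z) (z * Real.sin z) z := by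
  have h := (Real.hasDerivAt_sin z).sub ((hasDerivAt_id' z).mul (Real.hasDerivAt_cos z))
  exact h.congr_deriv (by ring)

lemma aux_nonneg (σ : ℝ) (h1 : Real.pi < σ) (h2 : σ < 3 * Real.pi / 2)
    (hzero : Real.sin σ - σ * Real.cos σ = 0) (z : ℝ) (hz0 : 0 ≤ z) (hz : z ≤ σ) :
    0 ≤ Real.sin z - z * Real.cos z := by
  have hpi := Real.pi_pos
  have hc : Continuous (fun z : ℝ => Real.sin z - z * Real.cos z) := by fun_prop
  rcases le_total z Real.pi with h | h
  · have hm : MonotoneOn (fun z : ℝ => Real.sin z - z * Real.cos z) (Set.Icc 0 Real.pi) := by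
      apply monotoneOn_of_deriv_nonneg (convex_Icc _ _) hc.continuousOn
      · exact fun y _ => (aux_hasDeriv y).differentiableAt.differentiableWithinAt
      · intro y hy
        rw [interior_Icc] at hy
        rw [(aux_hasDeriv y).deriv]
        exact mul_nonneg hy.1.le (Real.sin_nonneg_of_nonneg_of_le_pi hy.1.le hy.2.le)
    simpa using hm ⟨le_refl 0, hpi.le⟩ ⟨hz0, h⟩ hz0
  · have hm : AntitoneOn (fun z : ℝ => Real.sin z - z * Real.cos z) (Set.Icc Real.pi σ) := by
      apply antitoneOn_of_deriv_nonpos (convex_Icc _ _) hc.continuousOn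
      · exact fun y _ => (aux_hasDeriv y).differentiableAt.differentiableWithinAt
      · intro y hy
        rw [interior_Icc] at hy
        rw [(aux_hasDeriv y).deriv]
        have := Real.sin_nonneg_of_nonneg_of_le_pi (x := y - Real.pi)
          (by linarith [hy.1]) (by linarith [hy.2])
        rw [Real.sin_sub_pi] at this
        exact mul_nonpos_of_nonneg_of_nonpos (by linarith [hy.1]) (by linarith)
    have := hm ⟨h, hz⟩ ⟨h1.le, le_refl σ⟩ hz
    simp only [hzero] at this
    exact this

theorem theta_nonneg
    (σ : ℝ) (hσ : σ ∈ Set.Ioo Real.pi (3 * Real.pi / 2))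
    (hzero : Real.sin σ - σ * Real.cos σ = 0)
    (huniq : ∀ z ∈ Set.Ioo Real.pi (3 * Real.pi / 2),
      Real.sin z - z * Real.cos z = 0 → z = σ)
    (k : ℝ) (hk : 1 < k) (x : ℝ) (hx : x ∈ Set.Icc 0 (σ / k)) :
    0 ≤ Real.sin ((k - 1) * x) - (k - 1) / k * Real.sin (k * x) := by
  have hk0 : 0 < k := by linarith
  rcases hx.1.eq_or_lt with h0 | h0
  · simp [← h0]
  have hd : ∀ y : ℝ, y ≠ 0 → HasDerivAt (fun z : ℝ => Real.sin z / z)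
      ((Real.cos y * y - Real.sin y * 1) / y ^ 2) y := fun y hy =>
    (Real.hasDerivAt_sin y).div (hasDerivAt_id' y) hy
  have hm : AntitoneOn (fun z : ℝ => Real.sin z / z) (Set.Ioc 0 σ) := by
    apply antitoneOn_of_deriv_nonpos (convex_Ioc _ _)
    · exact fun y hy => (hd y hy.1.ne').continuousAt.continuousWithinAt
    · intro y hy
      rw [interior_Ioc] at hy
      exact (hd y hy.1.ne').differentiableAt.differentiableWithinAt
    · intro y hy
      rw [interior_Ioc] at hy
      rw [(hd y hy.1.ne').deriv]
      have := aux_nonneg σ hσ.1 hσ.2 hzero y hy.1.le hy.2.le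
      exact div_nonpos_of_nonpos_of_nonneg (by linarith) (sq_nonneg y)
  have hkx : k * x ≤ σ := by
    have := (le_div_iff₀ hk0).1 hx.2
    linarith
  have hs : 0 < (k - 1) * x := mul_pos (by linarith) h0
  have hle : (k - 1) * x ≤ k * x := by linarith
  have h := hm ⟨hs, hle.trans hkx⟩ ⟨mul_pos hk0 h0, hkx⟩ hle
  simp only at h
  rw [le_div_iff₀ hs] at h
  have e : Real.sin (k * x) / (k * x) * ((k - 1) * x) = (k - 1) / k * Real.sin (k * x) := by
    field_simp
  linarith
end

section
/- For an integer n ≥ 1, define f_n(x) = ∫_0^x sin(ns)/(2·sin(s)) ds (the integrand being extended continuously by the value n/2 at s = 0). Then f_4(2π/4) = 2/3, and for every integer n ≥ 4 one has f_n(2π/n) < f_{n+1}(2π/(n+1)); in particular the sequence (f_n(2π/n))_{n≥4} is strictly increasing. -/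
open Real intervalIntegral

noncomputable def fIntitem (n : ℕ) (x : ℝ) : ℝ :=
  ∫ s in (0:ℝ)..x, Real.sin (n * s) / (2 * Real.sin s)

open Polynomial in
noncomputable def CU (n : ℕ) (s : ℝ) : ℝ := (Polynomial.Chebyshev.U ℝ ((n:ℤ) - 1)).eval (Real.cos s) / 2

lemma CU_cont (n : ℕ) : Continuous (CU n) := by
  unfold CU
  exact ((Polynomial.continuous _).comp Real.continuous_cos).div_const 2

lemma CU_eq (n : ℕ) (s : ℝ) (hs : Real.sin s ≠ 0) :
    CU n s = Real.sin (n * s) / (2 * Real.sin s) := by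
  have h := Polynomial.Chebyshev.U_real_cos s ((n:ℤ) - 1)
  have h2 : (((n:ℤ) - 1 : ℤ) : ℝ) + 1 = n := by push_cast; ring
  rw [h2] at h
  rw [← h]
  unfold CU
  field_simp

lemma sin_div_pos (a t : ℝ) (ha : 4 ≤ a) (h0 : 0 < t) (h1 : t ≤ 2 * Real.pi) :
    0 < Real.sin (t / a) := by
  have hp := Real.pi_pos
  apply Real.sin_pos_of_pos_of_lt_pi (by positivity)
  rw [div_lt_iff₀ (by linarith)]
  nlinarith

lemma fInt_eq (n : ℕ) (hn : 4 ≤ n) :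
    fIntitem n (2 * Real.pi / n) = ∫ t in (0:ℝ)..(2 * Real.pi), CU n (t / n) / n := by
  have hn' : (4:ℝ) ≤ n := by exact_mod_cast hn
  have hp := Real.pi_pos
  have h1 : fIntitem n (2 * Real.pi / n) = ∫ s in (0:ℝ)..(2 * Real.pi / n), CU n s := by
    unfold fIntitem
    apply intervalIntegral.integral_congr_ae
    filter_upwards with s hs
    rw [Set.uIoc_of_le (by positivity)] at hs
    rw [CU_eq]
    have := sin_div_pos n (n * s) hn' (by have := hs.1; positivity)
      (by have := hs.2; rw [le_div_iff₀ (by linarith)] at this; linarith)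
    rw [mul_div_cancel_left₀ _ (by positivity)] at this
    exact this.ne'
  rw [h1, intervalIntegral.integral_div, intervalIntegral.integral_comp_div _ (by positivity)]
  simp only [zero_div, smul_eq_mul]
  field_simp

/-- `x^2 cos x / sin^2 x` is strictly decreasing. -/
lemma psi_anti : StrictAntiOn (fun x : ℝ => x ^ 2 * Real.cos x / Real.sin x ^ 2)
    (Set.Ioc 0 (Real.pi / 2)) := by
  have hp := Real.pi_pos
  have hs : ∀ x ∈ Set.Ioc 0 (Real.pi / 2), 0 < Real.sin x := fun x hx =>
    Real.sin_pos_of_pos_of_lt_pi hx.1 (by linarith [hx.2])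
  apply strictAntiOn_of_deriv_neg (convex_Ioc _ _)
  · apply ContinuousOn.div (by fun_prop) (by fun_prop)
    intro x hx
    exact pow_ne_zero _ (hs x hx).ne'
  · intro x hx
    rw [interior_Ioc] at hx
    have hsx := hs x ⟨hx.1, hx.2.le⟩
    have hd := (((hasDerivAt_id x).pow 2).mul (Real.hasDerivAt_cos x)).div
      ((Real.hasDerivAt_sin x).pow 2) (pow_ne_zero 2 hsx.ne')
    have hd' : HasDerivAt (fun x : ℝ => x ^ 2 * Real.cos x / Real.sin x ^ 2) _ x := hd
    rw [hd'.deriv]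
    have hc : 0 < Real.cos x := Real.cos_pos_of_mem_Ioo ⟨by linarith [hx.1], hx.2⟩
    have hlt := Real.sin_lt hx.1
    have hx0 := hx.1
    apply div_neg_of_neg_of_pos _ (by simp; positivity)
    have hsq := Real.sin_sq_add_cos_sq x
    have key : 2 * Real.sin x * Real.cos x - x * (Real.sin x ^ 2 + 2 * Real.cos x ^ 2) < 0 := by
      nlinarith [sq_nonneg (Real.cos x - 1), mul_pos hc (sub_pos.2 hlt),
        mul_nonneg hx0.le (sq_nonneg (Real.cos x - 1))]
    have : 0 < x * Real.sin x := by positivity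
    have := mul_neg_of_pos_of_neg this key
    simp
    nlinarith

lemma h_mono (a : ℝ) (ha : 4 ≤ a) :
    StrictMonoOn (fun t : ℝ => 1 / (a * Real.sin (t / a)) - 1 / ((a + 1) * Real.sin (t / (a + 1))))
      (Set.Ioc 0 (2 * Real.pi)) := by
  have hp := Real.pi_pos
  have hD : ∀ b : ℝ, 4 ≤ b → ∀ t ∈ Set.Ioc 0 (2 * Real.pi),
      HasDerivAt (fun t : ℝ => 1 / (b * Real.sin (t / b)))
        (-(1 / t ^ 2) * ((t / b) ^ 2 * Real.cos (t / b) / Real.sin (t / b) ^ 2)) t := by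
    intro b hb t ht
    have hs := sin_div_pos b t hb ht.1 ht.2
    have hb0 : 0 < b := by linarith
    have ht0 := ht.1
    have h := (((((hasDerivAt_id t).div_const b).sin).const_mul b).fun_inv
      (mul_pos hb0 hs).ne')
    simp only [one_div]
    have h' : HasDerivAt (fun t : ℝ => (b * Real.sin (t / b))⁻¹)
      (-(b * (Real.cos (t / b) * (1 / b))) / (b * Real.sin (t / b)) ^ 2) t := h
    refine h'.congr_deriv ?_
    field_simp
  have hD2 := fun t ht => (hD a ha t ht).fun_sub (hD (a+1) (by linarith) t ht)
  apply strictMonoOn_of_deriv_pos (convex_Ioc _ _)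
  · intro t ht
    exact (hD2 t ht).continuousAt.continuousWithinAt
  · intro t ht
    rw [interior_Ioc] at ht
    rw [(hD2 t ⟨ht.1, ht.2.le⟩).deriv]
    have ht0 := ht.1
    have ht1 := ht.2
    have hlt : t / (a + 1) < t / a := div_lt_div_of_pos_left ht0 (by linarith) (by linarith)
    have hle : t / a ≤ Real.pi / 2 := by
      rw [div_le_iff₀ (by linarith)]; nlinarith
    have := psi_anti (a := t / (a+1)) (b := t / a) ⟨by positivity, by linarith⟩
      ⟨by positivity, hle⟩ hlt
    simp only at this
    have h2 : 0 < 1 / t ^ 2 := by positivity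
    nlinarith [mul_lt_mul_of_pos_left this h2]

theorem fn_x2_increasing :
    fIntitem 4 (2 * Real.pi / 4) = 2 / 3 ∧
    ∀ n : ℕ, 4 ≤ n →
      fIntitem n (2 * Real.pi / n) < fIntitem (n + 1) (2 * Real.pi / (n + 1)) := by
  have hp := Real.pi_pos
  constructor
  · have h1 : fIntitem 4 (2 * Real.pi / 4) = ∫ s in (0:ℝ)..(2 * Real.pi / 4),
        (2 * Real.cos s - 4 * Real.sin s ^ 2 * Real.cos s) := by
      unfold fIntitem
      apply intervalIntegral.integral_congr_ae
      filter_upwards with s hs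
      rw [Set.uIoc_of_le (by positivity)] at hs
      have hs0 : 0 < Real.sin s := Real.sin_pos_of_pos_of_lt_pi hs.1 (by linarith [hs.2])
      have h4 : ((4:ℕ):ℝ) * s = 2 * (2 * s) := by push_cast; ring
      rw [h4, Real.sin_two_mul, Real.sin_two_mul, Real.cos_two_mul, Real.cos_sq']
      field_simp
      ring
    rw [h1, intervalIntegral.integral_eq_sub_of_hasDerivAt
      (f := fun s => 2 * Real.sin s - 4 / 3 * Real.sin s ^ 3)]
    · rw [show 2 * Real.pi / 4 = Real.pi / 2 by ring]
      simp
      norm_num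
    · intro s _
      have := ((Real.hasDerivAt_sin s).const_mul 2).fun_sub
        (((Real.hasDerivAt_sin s).fun_pow 3).const_mul (4/3))
      convert this using 1
      push_cast
      ring
    · apply Continuous.intervalIntegrable
      fun_prop
  · intro n hn
    have hn' : (4:ℝ) ≤ n := by exact_mod_cast hn
    have e2 := fInt_eq (n+1) (by omega)
    push_cast at e2
    rw [fInt_eq n hn, e2]
    have hm := h_mono n hn'
    set h := (fun t : ℝ => 1 / ((n:ℝ) * Real.sin (t / n)) -
      1 / (((n:ℝ) + 1) * Real.sin (t / ((n:ℝ) + 1)))) with hh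
    have hc1 : Continuous fun t : ℝ => CU n (t / n) / n :=
      ((CU_cont n).comp (continuous_id.div_const _)).div_const _
    have hc2 : Continuous fun t : ℝ => CU (n+1) (t / ((n:ℝ)+1)) / ((n:ℝ)+1) :=
      ((CU_cont (n+1)).comp (continuous_id.div_const _)).div_const _
    have hc3 : Continuous fun t : ℝ => h Real.pi / 2 * Real.sin t := by fun_prop
    have e1 : ∫ t in (0:ℝ)..(2 * Real.pi), CU n (t / n) / n =
        ∫ t in (0:ℝ)..(2 * Real.pi), (CU n (t / n) / n - h Real.pi / 2 * Real.sin t) := by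
      rw [intervalIntegral.integral_sub (hc1.intervalIntegrable _ _) (hc3.intervalIntegrable _ _),
        intervalIntegral.integral_const_mul, integral_sin]
      simp
    have key : ∀ t ∈ Set.Ioc 0 (2 * Real.pi),
        CU n (t / n) / n - h Real.pi / 2 * Real.sin t -
          CU (n+1) (t / ((n:ℝ)+1)) / ((n:ℝ)+1) = Real.sin t * (h t - h Real.pi) / 2 := by
      intro t ht
      have s1 := sin_div_pos n t hn' ht.1 ht.2
      have s2 := sin_div_pos (n+1) t (by linarith) ht.1 ht.2
      rw [CU_eq _ _ s1.ne', CU_eq _ _ s2.ne']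
      push_cast
      rw [mul_div_cancel₀ _ (by positivity), mul_div_cancel₀ _ (by positivity)]
      have : h t = 1 / ((n:ℝ) * Real.sin (t / n)) -
        1 / (((n:ℝ) + 1) * Real.sin (t / ((n:ℝ) + 1))) := rfl
      rw [this]
      generalize h Real.pi = c
      field_simp
      ring
    have hpm : Real.pi ∈ Set.Ioc 0 (2 * Real.pi) := ⟨hp, by linarith⟩
    rw [e1]
    apply intervalIntegral.integral_lt_integral_of_continuousOn_of_le_of_exists_lt (by positivity)
      (hc1.fun_sub hc3).continuousOn hc2.continuousOn
    · intro t ht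
      rw [← sub_nonpos]
      rw [key t ht]
      rcases le_total t Real.pi with h1 | h1
      · have a1 := hm.monotoneOn ht hpm h1
        have a2 := Real.sin_nonneg_of_nonneg_of_le_pi ht.1.le h1
        nlinarith [mul_nonneg a2 (sub_nonneg.2 a1)]
      · have a1 := hm.monotoneOn hpm ht h1
        have a2 : Real.sin t ≤ 0 := by
          have := Real.sin_nonneg_of_nonneg_of_le_pi (x := t - Real.pi) (by linarith)
            (by linarith [ht.2])
          rw [Real.sin_sub_pi] at this
          linarith
        nlinarith [mul_nonneg (neg_nonneg.2 a2) (sub_nonneg.2 a1)]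
    · have hq : Real.pi / 2 ∈ Set.Ioc 0 (2 * Real.pi) := ⟨by positivity, by linarith⟩
      refine ⟨Real.pi / 2, ⟨hq.1.le, hq.2⟩, ?_⟩
      rw [← sub_neg, key _ hq, Real.sin_pi_div_two]
      have := hm hq hpm (by linarith)
      linarith
end

section
/- For an integer n ≥ 1, define k_n(t) = 1/(2n·sin(t/n)) for t ∈ (0, 2π], and set h_n(t) = k_n(t) − k_{n+1}(t). Then for every integer n ≥ 4, h_n(t) > 0 for all t ∈ (0, 2π], and h_n is monotonically increasing on (0, 2π]: for all 0 < s < t ≤ 2π, h_n(s) ≤ h_n(t). -/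
lemma p_anti : AntitoneOn (fun x : ℝ => x ^ 2 * Real.cos x / Real.sin x ^ 2) (Set.Ioc 0 (Real.pi / 2)) := by
  have hs : ∀ x ∈ Set.Ioc (0:ℝ) (Real.pi / 2), 0 < Real.sin x := fun x hx =>
    Real.sin_pos_of_pos_of_lt_pi hx.1 (by linarith [hx.2, Real.pi_pos])
  have hd : ∀ x ∈ Set.Ioc (0:ℝ) (Real.pi / 2), HasDerivAt (fun x : ℝ => x ^ 2 * Real.cos x / Real.sin x ^ 2)
      (((2 * x * Real.cos x + x ^ 2 * (-Real.sin x)) * Real.sin x ^ 2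
        - x ^ 2 * Real.cos x * (2 * Real.sin x * Real.cos x)) / (Real.sin x ^ 2) ^ 2) x := by
    intro x hx
    have h1 := ((hasDerivAt_pow 2 x).mul (Real.hasDerivAt_cos x)).div
      ((Real.hasDerivAt_sin x).pow 2) (pow_ne_zero 2 (hs x hx).ne')
    refine HasDerivAt.congr_deriv h1 ?_
    simp
  refine antitoneOn_of_deriv_nonpos (convex_Ioc _ _)
    (fun x hx => (hd x hx).continuousAt.continuousWithinAt)
    (fun x hx => (hd x (interior_subset hx)).differentiableAt.differentiableWithinAt) ?_
  intro x hx
  have hx := interior_subset hx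
  rw [(hd x hx).deriv]
  apply div_nonpos_of_nonpos_of_nonneg _ (by positivity)
  have s0 := hs x hx
  have c0 : 0 ≤ Real.cos x := Real.cos_nonneg_of_neg_pi_div_two_le_of_le (by linarith [hx.1, Real.pi_pos]) hx.2
  have sx : Real.sin x ≤ x := Real.sin_le hx.1.le
  have hsc := Real.sin_sq_add_cos_sq x
  have key : 2 * Real.sin x * Real.cos x ≤ x * (1 + Real.cos x ^ 2) := by
    nlinarith [mul_nonneg (sub_nonneg.2 sx) c0, mul_nonneg hx.1.le (sq_nonneg (1 - Real.cos x))]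
  have e : (2 * x * Real.cos x + x ^ 2 * (-Real.sin x)) * Real.sin x ^ 2
        - x ^ 2 * Real.cos x * (2 * Real.sin x * Real.cos x)
      = x * Real.sin x * (2 * Real.sin x * Real.cos x - x * (1 + Real.cos x ^ 2)) := by
    linear_combination (-x ^ 2 * Real.sin x) * hsc
  rw [e]
  exact mul_nonpos_of_nonneg_of_nonpos (mul_nonneg hx.1.le s0.le) (by linarith)

lemma k_deriv (m t : ℝ) (hm : 0 < m) (ht : 0 < t) (hs : 0 < Real.sin (t / m)) :
    HasDerivAt (fun t : ℝ => 1 / (2 * m * Real.sin (t / m)))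
      (-(1 / (2 * t ^ 2)) * ((t / m) ^ 2 * Real.cos (t / m) / Real.sin (t / m) ^ 2)) t := by
  have h1 := ((((hasDerivAt_id t).div_const m).sin).const_mul (2 * m)).inv
    (by simp only [id]; positivity)
  simp only [one_div]
  refine HasDerivAt.congr_deriv h1 ?_
  simp only [id]
  field_simp
  try ring

theorem hn_pos_increasing
    (k : ℕ → ℝ → ℝ) (hk : ∀ (n : ℕ) (t : ℝ), k n t = 1 / (2 * n * Real.sin (t / n)))
    (h : ℕ → ℝ → ℝ) (hh : ∀ (n : ℕ) (t : ℝ), h n t = k n t - k (n + 1) t)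
    (n : ℕ) (hn : 4 ≤ n) :
    (∀ t ∈ Set.Ioc (0 : ℝ) (2 * Real.pi), 0 < h n t) ∧
    (∀ s t : ℝ, 0 < s → s < t → t ≤ 2 * Real.pi → h n s ≤ h n t) := by
  have hm4 : (4:ℝ) ≤ n := by exact_mod_cast hn
  have hfun : h n = fun t => 1 / (2 * (n:ℝ) * Real.sin (t / n))
      - 1 / (2 * ((n:ℝ) + 1) * Real.sin (t / ((n:ℝ) + 1))) := by
    funext t
    rw [hh, hk, hk]
    push_cast
    rfl
  rw [hfun]
  generalize (n:ℝ) = m at hm4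
  have hpi := Real.pi_pos
  have hm0 : 0 < m := by linarith
  have mem : ∀ M : ℝ, 4 ≤ M → ∀ t ∈ Set.Ioc (0:ℝ) (2 * Real.pi), t / M ∈ Set.Ioc 0 (Real.pi / 2) := by
    intro M hM t ht
    refine ⟨div_pos ht.1 (by linarith), ?_⟩
    rw [div_le_iff₀ (by linarith)]
    nlinarith [ht.2]
  have spos : ∀ M : ℝ, 4 ≤ M → ∀ t ∈ Set.Ioc (0:ℝ) (2 * Real.pi), 0 < Real.sin (t / M) := by
    intro M hM t ht
    have := mem M hM t ht
    exact Real.sin_pos_of_pos_of_lt_pi this.1 (by linarith [this.2])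
  constructor
  · intro t ht
    have a := spos m hm4 t ht
    have b := spos (m + 1) (by linarith) t ht
    have ma := mem m hm4 t ht
    have hA : 0 < m / (m + 1) := by positivity
    have hB : 0 < 1 / (m + 1) := by positivity
    have hAB : m / (m + 1) + 1 / (m + 1) = 1 := by field_simp
    have hM : t / m ∈ Set.Icc 0 Real.pi := ⟨ma.1.le, by linarith [ma.2]⟩
    have hZ : (0:ℝ) ∈ Set.Icc 0 Real.pi := ⟨le_refl _, hpi.le⟩
    have hS := strictConcaveOn_sin_Icc
    have hc := hS.2 hM hZ ma.1.ne' hA hB hAB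
    have e : m / (m + 1) * (t / m) = t / (m + 1) := by field_simp
    simp only [smul_eq_mul, Real.sin_zero, mul_zero, add_zero, e] at hc
    rw [div_mul_eq_mul_div, div_lt_iff₀ (by linarith)] at hc
    rw [sub_pos]
    apply one_div_lt_one_div_of_lt (by positivity)
    linarith
  · intro s t hs0 hst ht
    have hd : ∀ x ∈ Set.Ioc (0:ℝ) (2 * Real.pi), _ := fun x hx =>
      (k_deriv m x hm0 hx.1 (spos m hm4 x hx)).sub
        (k_deriv (m + 1) x (by linarith) hx.1 (spos (m + 1) (by linarith) x hx))
    refine monotoneOn_of_deriv_nonneg (convex_Ioc 0 (2 * Real.pi))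
      (fun x hx => (hd x hx).continuousAt.continuousWithinAt)
      (fun x hx => (hd x (interior_subset hx)).differentiableAt.differentiableWithinAt) ?_
      ⟨hs0, by linarith⟩ ⟨by linarith, ht⟩ hst.le
    intro x hx
    have hx := interior_subset hx
    refine le_of_le_of_eq ?_ (hd x hx).deriv.symm
    have hx0 := hx.1
    have := p_anti (mem (m + 1) (by linarith) x hx) (mem m hm4 x hx)
      (div_le_div_of_nonneg_left hx0.le hm0 (by linarith))
    simp only at this
    have h2 : 0 < 1 / (2 * x ^ 2) := by positivity
    nlinarith [mul_le_mul_of_nonneg_left this h2.le]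
end

section
/- For an odd integer m ≥ 3, define g_m(y) = (−1)^{(m+1)/2} · ∫_0^y cos(mt)/(2·cos(t)) dt. Then for every odd integer m ≥ 43 and every y ∈ [0, π/2], one has g_m(y) ≤ 0.22. -/
open Real intervalIntegral

noncomputable def gOsc (m : ℕ) (y : ℝ) : ℝ :=
  (-1 : ℝ) ^ ((m + 1) / 2) * ∫ t in (0:ℝ)..y, Real.cos (m * t) / (2 * Real.cos t)

lemma gm_le_of_deriv {f f' : ℝ → ℝ} {a b : ℝ} (hab : a ≤ b)
    (hf : ∀ x ∈ Set.Icc a b, HasDerivAt f (f' x) x)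
    (h0 : ∀ x ∈ Set.Ioo a b, 0 ≤ f' x) : f a ≤ f b := by
  have : MonotoneOn f (Set.Icc a b) := by
    apply monotoneOn_of_deriv_nonneg (convex_Icc a b)
    · exact fun x hx => (hf x hx).continuousAt.continuousWithinAt
    · intro x hx
      rw [interior_Icc] at hx
      exact (hf x (Set.Ioo_subset_Icc_self hx)).differentiableAt.differentiableWithinAt
    · intro x hx
      rw [interior_Icc] at hx
      rw [(hf x (Set.Ioo_subset_Icc_self hx)).deriv]
      exact h0 x hx
  exact this (Set.left_mem_Icc.2 hab) (Set.right_mem_Icc.2 hab) hab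

lemma gm_cos_le {u : ℝ} (hu : 0 ≤ u) : cos u ≤ 1 - u ^ 2 / 2 + u ^ 4 / 24 := by
  have := gm_le_of_deriv (f := fun x => 1 - x ^ 2 / 2 + x ^ 4 / 24 - cos x)
    (f' := fun x => sin x - (x - x ^ 3 / 6)) hu
    (by
      intro x _
      have h := ((((hasDerivAt_pow 2 x).div_const 2).const_sub 1).add
        ((hasDerivAt_pow 4 x).div_const 24)).sub (hasDerivAt_cos x)
      refine HasDerivAt.congr_deriv h ?_
      norm_num
      ring)
    (by
      intro x hx
      have := sin_ge_sub_cube hx.1.le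
      linarith)
  norm_num at this
  linarith

lemma gm_sin_le {u : ℝ} (hu : 0 ≤ u) : sin u ≤ u - u ^ 3 / 6 + u ^ 5 / 120 := by
  have := gm_le_of_deriv (f := fun x => x - x ^ 3 / 6 + x ^ 5 / 120 - sin x)
    (f' := fun x => 1 - x ^ 2 / 2 + x ^ 4 / 24 - cos x) hu
    (by
      intro x _
      have h := (((hasDerivAt_id x).sub ((hasDerivAt_pow 3 x).div_const 6)).add
        ((hasDerivAt_pow 5 x).div_const 120)).sub (hasDerivAt_sin x)
      refine HasDerivAt.congr_deriv h ?_
      norm_num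
      ring)
    (by
      intro x hx
      have := gm_cos_le hx.1.le
      linarith)
  norm_num at this
  linarith

noncomputable def gmF (k : ℕ) (x : ℝ) : ℝ :=
  x + ∑ j ∈ Finset.range k, sin (2 * (j + 1) * x) / (j + 1)

noncomputable def gmK (k : ℕ) (x : ℝ) : ℝ :=
  1 + ∑ j ∈ Finset.range k, 2 * cos (2 * (j + 1) * x)

lemma gmF_deriv (k : ℕ) (x : ℝ) : HasDerivAt (gmF k) (gmK k x) x := by
  unfold gmF gmK
  apply (hasDerivAt_id x).add
  apply HasDerivAt.fun_sum
  intro j _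
  have h := (((hasDerivAt_id x).const_mul (2 * ((j:ℝ) + 1))).sin).div_const ((j:ℝ) + 1)
  have hj : (j:ℝ) + 1 ≠ 0 := by positivity
  refine HasDerivAt.congr_deriv h ?_
  simp only [id]
  field_simp

lemma gmK_cont (k : ℕ) : Continuous (gmK k) := by
  unfold gmK
  fun_prop

lemma gmK_mul (k : ℕ) (x : ℝ) : gmK k x * sin x = sin ((2 * k + 1) * x) := by
  induction k with
  | zero => simp [gmK]
  | succ k ih =>
    have : gmK (k+1) x = gmK k x + 2 * cos (2 * (k + 1) * x) := by
      simp [gmK, Finset.sum_range_succ, add_assoc]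
    rw [this, add_mul, ih]
    push_cast
    have e1 : (2 * (k:ℝ) + 1) * x = 2 * (k + 1) * x - x := by ring
    have e2 : (2 * ((k:ℝ) + 1) + 1) * x = 2 * (k + 1) * x + x := by ring
    rw [e1, e2, sin_sub, sin_add]
    ring

lemma gmF_zero (k : ℕ) : gmF k 0 = 0 := by simp [gmF]

lemma gmF_pi (k : ℕ) : gmF k (π / 2) = π / 2 := by
  unfold gmF
  rw [Finset.sum_eq_zero, add_zero]
  intro j _
  have : 2 * ((j:ℝ) + 1) * (π / 2) = ((j + 1 : ℕ) : ℝ) * π := by push_cast; ring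
  rw [this, sin_nat_mul_pi, zero_div]

lemma gmF_far (k : ℕ) {x : ℝ} (hx : 0 < x) (hx2 : x ≤ π / 2) :
    gmF k x ≤ π / 2 + 2 / ((2 * k + 1) * sin x) := by
  set m : ℝ := 2 * k + 1 with hm
  have hmpos : 0 < m := by positivity
  have hs : ∀ t ∈ Set.Icc x (π / 2), 0 < sin t := fun t ht =>
    sin_pos_of_pos_of_lt_pi (lt_of_lt_of_le hx ht.1) (by linarith [ht.2, pi_pos])
  have key := gm_le_of_deriv (f := fun t => gmF k t + (cos (m * t) - 1) / (m * sin t))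
    (f' := fun t => cos t * (1 - cos (m * t)) / (m * sin t ^ 2)) hx2
    (by
      intro t ht
      have hst := hs t ht
      have h := (gmF_deriv k t).add
        (((((hasDerivAt_id t).const_mul m).cos).sub_const 1).div
          ((hasDerivAt_sin t).const_mul m) (by positivity))
      refine HasDerivAt.congr_deriv h ?_
      have hK : gmK k t = sin (m * t) / sin t := by
        rw [eq_div_iff hst.ne', gmK_mul]
      rw [hK]
      simp only [id]
      field_simp
      ring)
    (by
      intro t ht
      have hst := hs t (Set.Ioo_subset_Icc_self ht)
      have hc : 0 ≤ cos t := cos_nonneg_of_mem_Icc ⟨by linarith [ht.1, pi_pos], ht.2.le⟩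
      have := cos_le_one (m * t)
      have : 0 ≤ 1 - cos (m * t) := by linarith
      positivity)
  simp only [gmF_pi, sin_pi_div_two] at key
  have hsx := hs x ⟨le_refl _, hx2⟩
  have h1 : (cos (m * (π / 2)) - 1) / (m * 1) ≤ 0 :=
    div_nonpos_of_nonpos_of_nonneg (by linarith [cos_le_one (m * (π / 2))]) (by positivity)
  have h2 : -(2 / (m * sin x)) ≤ (cos (m * x) - 1) / (m * sin x) := by
    rw [← neg_div]
    apply div_le_div_of_nonneg_right _ (by positivity)
    linarith [neg_one_le_cos (m * x)]
  linarith

lemma gm_q_mono {u : ℝ} (hu : u ≤ π) :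
    u - u ^ 3 / 18 + u ^ 5 / 600 ≤ π - π ^ 3 / 18 + π ^ 5 / 600 := by
  refine gm_le_of_deriv (f := fun u => u - u ^ 3 / 18 + u ^ 5 / 600)
    (f' := fun u => 1 - u ^ 2 / 6 + u ^ 4 / 120) hu ?_ ?_
  · intro x _
    have h := (((hasDerivAt_id x).sub ((hasDerivAt_pow 3 x).div_const 18)).add
        ((hasDerivAt_pow 5 x).div_const 600))
    refine HasDerivAt.congr_deriv h ?_
    norm_num
    ring
  · intro x _
    nlinarith [sq_nonneg (x ^ 2 - 10)]

lemma gm_pi_num : π - π ^ 3 / 18 + π ^ 5 / 600 ≤ 1.95 := by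
  have h1 : π < 3.1416 := pi_lt_d4
  have h2 : (3.1415:ℝ) < π := pi_gt_d4
  have h3 : (3.1415:ℝ) ^ 3 ≤ π ^ 3 := by gcongr
  have h5 : π ^ 5 ≤ (3.1416:ℝ) ^ 5 := by gcongr
  norm_num at *
  linarith

lemma gmF_near (k : ℕ) (hk : 21 ≤ k) {x : ℝ} (hx : 0 ≤ x) (hx2 : (2 * k + 1) * x ≤ π) :
    gmF k x ≤ 1.96 := by
  have hk' : (21:ℝ) ≤ k := by exact_mod_cast hk
  set m : ℝ := 2 * k + 1 with hm
  have hmpos : 43 ≤ m := by linarith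
  have key := gm_le_of_deriv
    (f := fun t => (m * t) - (m * t) ^ 3 / 18 + (m * t) ^ 5 / 600 - 0.998 * gmF k t)
    (f' := fun t => m * (1 - (m * t) ^ 2 / 6 + (m * t) ^ 4 / 120) - 0.998 * gmK k t) hx
    (by
      intro t ht
      have hl := (hasDerivAt_id t).const_mul m
      have h := ((hl.sub ((hl.pow 3).div_const 18)).add
        ((hl.pow 5).div_const 600)).sub ((gmF_deriv k t).const_mul 0.998)
      refine HasDerivAt.congr_deriv h ?_
      simp only [id]
      norm_num
      ring)
    (by
      intro t ht
      have ht0 := ht.1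
      have hmt : m * t ≤ π := le_trans (by have := ht.2.le; gcongr) hx2
      have ht1 : t ≤ 0.1 := by nlinarith [pi_lt_d2]
      have hs : 0.998 * t ≤ sin t := by
        have := sin_ge_sub_cube ht0.le
        have h3 : t ^ 3 ≤ 0.01 * t := by nlinarith [mul_nonneg ht0.le ht0.le]
        linarith
      have hspos : 0 < sin t := lt_of_lt_of_le (by positivity) hs
      have hK := gmK_mul k t
      rw [← hm] at hK
      have hmt0 : 0 < m * t := by positivity
      have hsin := gm_sin_le hmt0.le
      have hK0 : 0 ≤ gmK k t := by
        have : 0 ≤ gmK k t * sin t := by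
          rw [hK]; exact sin_nonneg_of_nonneg_of_le_pi hmt0.le hmt
        exact nonneg_of_mul_nonneg_left this hspos
      have h1 : gmK k t * (0.998 * t) ≤ gmK k t * sin t := by gcongr
      have h2 : 0 ≤ (m * (1 - (m * t) ^ 2 / 6 + (m * t) ^ 4 / 120) - 0.998 * gmK k t) * t := by
        rw [hK] at h1
        have := h1.trans hsin
        linear_combination this
      exact nonneg_of_mul_nonneg_left h2 ht0)
  simp only [gmF_zero] at key
  norm_num at key
  have := gm_q_mono hx2
  have := gm_pi_num
  norm_num at *
  linarith

lemma gmF_bound (k : ℕ) (hk : 21 ≤ k) {x : ℝ} (hx : 0 ≤ x) (hx2 : x ≤ π / 2) :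
    gmF k x ≤ π / 2 + 0.44 := by
  have hk' : (21:ℝ) ≤ k := by exact_mod_cast hk
  have hpi := pi_gt_d2
  have hpi' := pi_lt_d2
  have hmpos : (43:ℝ) ≤ 2 * k + 1 := by linarith
  have hm0 : (0:ℝ) < 2 * k + 1 := by linarith
  rcases le_total ((2 * k + 1) * x) π with h | h
  · have := gmF_near k hk hx h
    norm_num at *
    linarith
  rcases le_total ((2 * k + 1) * x) (2 * π) with h' | h'
  · have hb := gmF_near k hk (x := π / (2 * k + 1)) (by positivity) (by field_simp; rfl)
    have := gm_le_of_deriv (f := fun t => - gmF k t) (f' := fun t => - gmK k t)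
      (a := π / (2 * k + 1)) (b := x) (by rw [div_le_iff₀ hm0]; linarith)
      (fun t _ => (gmF_deriv k t).neg)
      (by
        intro t ht
        have h1 : π < (2 * k + 1) * t := by
          have := ht.1
          rw [div_lt_iff₀ hm0] at this; linarith
        have h2 : (2 * k + 1) * t ≤ 2 * π := le_trans (by have := ht.2.le; gcongr) h'
        have ht0 : 0 < t := lt_trans (by positivity) ht.1
        have hs : 0 < sin t := sin_pos_of_pos_of_lt_pi ht0 (by linarith [ht.2])
        have hneg : sin ((2 * k + 1) * t) ≤ 0 := by
          have : 0 ≤ sin ((2 * k + 1) * t - π) :=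
            sin_nonneg_of_nonneg_of_le_pi (by linarith) (by linarith)
          rw [sin_sub_pi] at this
          linarith
        rw [← gmK_mul] at hneg
        have : 0 ≤ (- gmK k t) * sin t := by linarith
        exact nonneg_of_mul_nonneg_left this hs)
    norm_num at *
    linarith
  · set x0 : ℝ := 2 * π / (2 * k + 1) with hx0
    have hx0pos : 0 < x0 := by positivity
    have hx0x : x0 ≤ x := by rw [hx0, div_le_iff₀ hm0]; linarith
    have hmx : (2 * k + 1) * x0 = 2 * π := by rw [hx0]; field_simp
    have hx01 : x0 ≤ 0.15 := by nlinarith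
    have h1 : 0.9 * x0 ≤ sin x0 := by
      have := sin_ge_sub_cube hx0pos.le
      have h3 : x0 ^ 3 ≤ 0.1 * x0 := by nlinarith [mul_nonneg hx0pos.le hx0pos.le]
      linarith
    have h2 : sin x0 ≤ sin x := sin_le_sin_of_le_of_le_pi_div_two (by linarith) hx2 hx0x
    have h3 : 5 ≤ (2 * k + 1) * sin x := by
      have : (2 * (k:ℝ) + 1) * (0.9 * x0) ≤ (2 * k + 1) * sin x := by
        have := h1.trans h2
        gcongr
      linarith
    have := gmF_far k (lt_of_lt_of_le hx0pos hx0x) hx2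
    have h4 : 2 / ((2 * k + 1) * sin x) ≤ 0.44 := by
      rw [div_le_iff₀ (by linarith)]
      linarith
    linarith

theorem gm_bound (m : ℕ) (hm : Odd m) (hm43 : 43 ≤ m)
    (y : ℝ) (hy : y ∈ Set.Icc 0 (Real.pi / 2)) :
    gOsc m y ≤ 0.22 := by
  obtain ⟨k, rfl⟩ := hm
  have hk : 21 ≤ k := by omega
  have hb := gmF_bound k hk (x := π / 2 - y) (by linarith [hy.2]) (by linarith [hy.1])
  have hIntEq : ∫ t in (0:ℝ)..y, Real.cos (((2 * k + 1 : ℕ) : ℝ) * t) / (2 * Real.cos t)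
      = ∫ t in (0:ℝ)..y, (-1) ^ k / 2 * gmK k (π / 2 - t) := by
    apply intervalIntegral.integral_congr_Ioo_of_le hy.1
    intro t ht
    have hc : 0 < cos t := cos_pos_of_mem_Ioo ⟨by linarith [ht.1, pi_pos], by linarith [ht.2, hy.2]⟩
    have h := gmK_mul k (π / 2 - t)
    rw [sin_pi_div_two_sub] at h
    have e : (2 * (k:ℝ) + 1) * (π / 2 - t) = (π / 2 - (2 * k + 1) * t) + k * π := by ring
    rw [e, sin_add_nat_mul_pi, sin_pi_div_two_sub] at h
    have hsq : ((-1:ℝ) ^ k) * (-1) ^ k = 1 := by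
      rw [← mul_pow]; simp
    push_cast
    rw [div_eq_iff (by positivity)]
    linear_combination (-(-1:ℝ) ^ k) * h - cos ((2 * k + 1) * t) * hsq
  have hftc : ∫ t in (0:ℝ)..y, (-1) ^ k / 2 * gmK k (π / 2 - t)
      = (-1) ^ k / 2 * (π / 2 - gmF k (π / 2 - y)) := by
    rw [intervalIntegral.integral_eq_sub_of_hasDerivAt
      (f := fun t => - ((-1) ^ k / 2 * gmF k (π / 2 - t)))]
    · simp only [sub_zero, gmF_pi]; ring
    · intro t _
      have h := (((gmF_deriv k (π / 2 - t)).comp t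
        ((hasDerivAt_id t).const_sub (π / 2))).const_mul ((-1:ℝ) ^ k / 2)).neg
      refine HasDerivAt.congr_deriv h ?_
      ring
    · apply Continuous.intervalIntegrable
      have := gmK_cont k
      fun_prop
  unfold gOsc
  rw [hIntEq, hftc]
  have e : (2 * k + 1 + 1) / 2 = k + 1 := by omega
  rw [e]
  have hsq : ((-1:ℝ) ^ k) * (-1) ^ k = 1 := by
    rw [← mul_pow]; simp
  have : (-1:ℝ) ^ (k + 1) * ((-1) ^ k / 2 * (π / 2 - gmF k (π / 2 - y)))
      = (gmF k (π / 2 - y) - π / 2) / 2 := by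
    rw [pow_succ]
    linear_combination (-(π / 2 - gmF k (π / 2 - y)) / 2) * hsq
  rw [this]
  norm_num at *
  linarith
end

section
/- For an odd integer m ≥ 3, define g_m(y) = (−1)^{(m+1)/2} · ∫_0^y cos(mt)/(2·cos(t)) dt. Then for every odd integer m ≥ 43 and every y ∈ [0, 11/9], one has g_m(y) ≤ 0.06. -/
open Real intervalIntegral

theorem cos_low : (0.33:ℝ) ≤ Real.cos (11/9) := by
  have h1 := Real.one_sub_sq_div_two_le_cos (x := 11/36)
  have e1 : Real.cos (11/18) = 2 * Real.cos (11/36)^2 - 1 := by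
    rw [← Real.cos_two_mul]; norm_num
  have e2 : Real.cos (11/9) = 2 * Real.cos (11/18)^2 - 1 := by
    rw [← Real.cos_two_mul]; norm_num
  have h2 : (0.953:ℝ) ≤ Real.cos (11/36) := by norm_num at h1 ⊢; linarith
  have h3 : (0.816:ℝ) ≤ Real.cos (11/18) := by rw [e1]; nlinarith
  rw [e2]; nlinarith

theorem abs_bound (m : ℕ) (hm43 : 43 ≤ m)
    (y : ℝ) (h0 : 0 ≤ y) (h1 : y ≤ 11 / 9) :
    |∫ t in (0:ℝ)..y, Real.cos (m * t) / (2 * Real.cos t)| ≤ 0.06 := by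
  have hm : (43:ℝ) ≤ m := by exact_mod_cast hm43
  have hm0 : (0:ℝ) < m := by linarith
  have hpi := Real.pi_gt_three
  have hcos : ∀ t ∈ Set.uIcc 0 y, (0.33:ℝ) ≤ Real.cos t := by
    intro t ht
    rw [Set.uIcc_of_le h0] at ht
    exact cos_low.trans (Real.cos_le_cos_of_nonneg_of_le_pi ht.1 (by linarith) (by linarith [ht.2]))
  have hne : ∀ t ∈ Set.uIcc 0 y, Real.cos t ≠ 0 := fun t ht => by
    have := hcos t ht
    intro h; rw [h] at this; norm_num at this
  have hu : ∀ t ∈ Set.uIcc 0 y, HasDerivAt (fun t => 1 / (2 * Real.cos t))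
      (Real.sin t / (2 * Real.cos t ^ 2)) t := by
    intro t ht
    have hn := hne t ht
    have := (hasDerivAt_const t (1:ℝ)).div ((Real.hasDerivAt_cos t).const_mul 2)
      (mul_ne_zero two_ne_zero hn)
    refine HasDerivAt.congr_deriv this ?_
    field_simp
    ring
  have hv : ∀ t ∈ Set.uIcc 0 y, HasDerivAt (fun t => Real.sin (m * t) / m)
      (Real.cos (m * t)) t := by
    intro t _
    have := (((hasDerivAt_id t).const_mul (m:ℝ)).sin).div_const (m:ℝ)
    refine HasDerivAt.congr_deriv this ?_
    simp only [id, mul_one]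
    field_simp
  have hc1 : ContinuousOn (fun t => Real.sin t / (2 * Real.cos t ^ 2)) (Set.uIcc 0 y) := by
    apply ContinuousOn.div (by fun_prop) (by fun_prop)
    intro t ht
    have := hne t ht
    positivity
  have hi1 := hc1.intervalIntegrable (μ := MeasureTheory.volume)
  have hi2 : IntervalIntegrable (fun t => Real.cos (m * t)) MeasureTheory.volume 0 y :=
    Continuous.intervalIntegrable (by fun_prop) _ _
  have parts := integral_mul_deriv_eq_deriv_mul hu hv hi1 hi2
  have ftc := integral_eq_sub_of_hasDerivAt hu hi1
  have hb : ‖∫ t in (0:ℝ)..y, Real.sin t / (2 * Real.cos t ^ 2) * (Real.sin (m * t) / m)‖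
      ≤ ∫ t in (0:ℝ)..y, (Real.sin t / (2 * Real.cos t ^ 2)) * (1 / m) := by
    apply norm_integral_le_of_norm_le h0
    · refine Filter.Eventually.of_forall fun t ht => ?_
      have hs : 0 ≤ Real.sin t := Real.sin_nonneg_of_nonneg_of_le_pi ht.1.le (by linarith [ht.2])
      rw [norm_mul, Real.norm_of_nonneg (by positivity), Real.norm_eq_abs, abs_div,
        abs_of_pos hm0]
      gcongr
      exact Real.abs_sin_le_one _
    · exact hi1.mul_const _
  rw [integral_mul_const, ftc] at hb
  have heq : (∫ t in (0:ℝ)..y, Real.cos (m * t) / (2 * Real.cos t)) =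
      ∫ t in (0:ℝ)..y, 1 / (2 * Real.cos t) * Real.cos (m * t) := by
    congr 1; ext t; ring
  rw [heq, parts]
  have hcy := hcos y Set.right_mem_uIcc
  have hpos : 0 < Real.cos y := by linarith
  have hA : 1 / (2 * Real.cos y) ≤ 1.52 := by
    rw [div_le_iff₀ (by positivity)]; linarith
  have hA0 : 0 ≤ 1 / (2 * Real.cos y) := by positivity
  have hM : 1 / (m:ℝ) ≤ 1/43 := by gcongr
  have hM0 : 0 ≤ 1 / (m:ℝ) := by positivity
  have hfirst : |1 / (2 * Real.cos y) * (Real.sin (m * y) / m)| ≤ 1 / (2 * Real.cos y) * (1 / m) := by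
    rw [abs_mul, abs_of_nonneg hA0, abs_div, abs_of_pos hm0]
    gcongr
    exact Real.abs_sin_le_one _
  rw [Real.norm_eq_abs] at hb
  simp only [mul_zero, Real.sin_zero, zero_div, sub_zero, Real.cos_zero, mul_one] at hb ⊢
  refine (abs_sub _ _).trans ((add_le_add hfirst hb).trans ?_)
  nlinarith

theorem gm_bound_small (m : ℕ) (hm : Odd m) (hm43 : 43 ≤ m)
    (y : ℝ) (hy : y ∈ Set.Icc 0 ((11:ℝ) / 9)) :
    gOsc m y ≤ 0.06 := by
  have h := abs_bound m hm43 y hy.1 hy.2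
  unfold gOsc
  refine (le_abs_self _).trans ?_
  rw [abs_mul, abs_pow, abs_neg, abs_one, one_pow, one_mul]
  exact h
end

section
/- For an integer n ≥ 1, define f_n(x) = ∫_0^x sin(ns)/(2·sin(s)) ds (the integrand being extended continuously by the value n/2 at s = 0). Then for every integer n ≥ 4 and every x ∈ [π/n, π/2], one has f_n(x) ≥ f_n(2π/n). -/
open Real intervalIntegral

lemma abs_sin_nat_mul_le_aux (n : ℕ) (s : ℝ) : |Real.sin (n * s)| ≤ n * |Real.sin s| := by
  induction n with
  | zero => simp
  | succ k ih =>
    have h : ((k + 1 : ℕ) : ℝ) * s = k * s + s := by push_cast; ring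
    rw [h, Real.sin_add]
    have h1 := abs_add_le (Real.sin (k * s) * Real.cos s) (Real.cos (k * s) * Real.sin s)
    rw [abs_mul, abs_mul] at h1
    have h2 := Real.abs_cos_le_one s
    have h3 := Real.abs_cos_le_one (k * s)
    have h4 := mul_le_mul_of_nonneg_left h2 (abs_nonneg (Real.sin (k * s)))
    have h5 := mul_le_mul_of_nonneg_right h3 (abs_nonneg (Real.sin s))
    push_cast
    linarith

lemma integrand_intervalIntegrable (n : ℕ) (a b : ℝ) :
    IntervalIntegrable (fun s => Real.sin (n * s) / (2 * Real.sin s)) MeasureTheory.volume a b := by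
  have hc : IntervalIntegrable (fun _ : ℝ => (n : ℝ) / 2) MeasureTheory.volume a b :=
    intervalIntegrable_const
  refine hc.mono_fun (Measurable.aestronglyMeasurable (by fun_prop)) ?_
  refine Filter.Eventually.of_forall fun s => ?_
  have h := abs_sin_nat_mul_le_aux n s
  simp only [Real.norm_eq_abs, abs_div, abs_mul, abs_two, Nat.abs_cast]
  by_cases hs : |Real.sin s| = 0
  · rw [hs]; simp; positivity
  · have : 0 < |Real.sin s| := lt_of_le_of_ne (abs_nonneg _) (Ne.symm hs)
    rw [div_le_div_iff₀ (by positivity) (by norm_num)]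
    linarith

theorem fn_min_at_x2 (n : ℕ) (hn : 4 ≤ n)
    (x : ℝ) (hx : x ∈ Set.Icc (Real.pi / n) (Real.pi / 2)) :
    fIntitem n x ≥ fIntitem n (2 * Real.pi / n) := by
  obtain ⟨hx1, hx2⟩ := hx
  have hn4 : (4 : ℝ) ≤ n := by exact_mod_cast hn
  have hn0 : (0 : ℝ) < n := by linarith
  have hpi := Real.pi_pos
  have ha0 : 0 < 2 * Real.pi / n := by positivity
  have hb0 : 0 < Real.pi / n := by positivity
  have ha2 : 2 * Real.pi / n ≤ Real.pi / 2 := by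
    rw [div_le_div_iff₀ hn0 (by norm_num)]; nlinarith
  have key : fIntitem n x - fIntitem n (2 * Real.pi / n)
      = ∫ s in (2 * Real.pi / n)..x, Real.sin (n * s) / (2 * Real.sin s) :=
    integral_interval_sub_left (integrand_intervalIntegrable n _ _)
      (integrand_intervalIntegrable n _ _)
  suffices h : 0 ≤ ∫ s in (2 * Real.pi / n)..x, Real.sin (n * s) / (2 * Real.sin s) by
    linarith
  rcases le_total x (2 * Real.pi / n) with hxa | hxa
  · rw [integral_symm, ← integral_neg]
    refine integral_nonneg hxa fun s hs => ?_
    have hs1 : 0 ≤ Real.sin s :=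
      Real.sin_nonneg_of_nonneg_of_le_pi (by linarith [hs.1]) (by linarith [hs.2])
    have e1 : Real.pi ≤ n * s := by
      have := hx1.trans hs.1
      rw [div_le_iff₀ hn0] at this; linarith
    have e2 : n * s ≤ 2 * Real.pi := by
      have := hs.2
      rw [le_div_iff₀ hn0] at this; linarith
    have hs2 : Real.sin (n * s) ≤ 0 := by
      have := Real.sin_nonneg_of_nonneg_of_le_pi (x := n * s - Real.pi) (by linarith) (by linarith)
      rw [Real.sin_sub_pi] at this; linarith
    have := div_nonpos_of_nonpos_of_nonneg hs2 (by positivity : 0 ≤ 2 * Real.sin s)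
    linarith
  · have hpos : ∀ s ∈ Set.uIcc (2 * Real.pi / n) x, 0 < Real.sin s := by
      intro s hs
      rw [Set.uIcc_of_le hxa] at hs
      exact Real.sin_pos_of_pos_of_lt_pi (by linarith [hs.1]) (by linarith [hs.2])
    have parts := integral_mul_deriv_eq_deriv_mul (a := 2 * Real.pi / n) (b := x)
      (u := fun s => (2 * Real.sin s)⁻¹) (u' := fun s => -(2 * Real.cos s) / (2 * Real.sin s) ^ 2)
      (v := fun s => (1 - Real.cos (n * s)) / n) (v' := fun s => Real.sin (n * s))
      (fun s hs => ((Real.hasDerivAt_sin s).const_mul 2).fun_inv (by have := hpos s hs; positivity))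
      (fun s hs => by
        have h1 : HasDerivAt (fun s : ℝ => (n : ℝ) * s) n s := by
          simpa using (hasDerivAt_id s).const_mul (n : ℝ)
        have h2 := (h1.cos.const_sub 1).div_const (n : ℝ)
        convert h2 using 1
        field_simp)
      (ContinuousOn.intervalIntegrable (by
        refine ContinuousOn.div (by fun_prop) (by fun_prop) fun s hs => ?_
        have := hpos s hs
        positivity))
      (Continuous.intervalIntegrable (by fun_prop) _ _)
    have e : (∫ s in (2 * Real.pi / n)..x, Real.sin (n * s) / (2 * Real.sin s))
        = ∫ s in (2 * Real.pi / n)..x, (2 * Real.sin s)⁻¹ * Real.sin (n * s) := by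
      congr 1; ext s; rw [div_eq_inv_mul]
    rw [e, parts]
    have hv : Real.cos (n * (2 * Real.pi / n)) = 1 := by
      rw [mul_div_cancel₀ _ hn0.ne', Real.cos_two_pi]
    have hI : 0 ≤ ∫ s in (2 * Real.pi / n)..x,
        -(-(2 * Real.cos s) / (2 * Real.sin s) ^ 2 * ((1 - Real.cos (n * s)) / n)) := by
      refine integral_nonneg hxa fun s hs => ?_
      have hc : 0 ≤ Real.cos s :=
        Real.cos_nonneg_of_neg_pi_div_two_le_of_le (by linarith [hs.1]) (by linarith [hs.2])
      have hd : 0 ≤ 1 - Real.cos (n * s) := by linarith [Real.cos_le_one (n * s)]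
      rw [neg_div, neg_mul, neg_neg]
      positivity
    rw [integral_neg] at hI
    have hb : 0 ≤ (2 * Real.sin x)⁻¹ * ((1 - Real.cos (n * x)) / n) := by
      have := hpos x Set.right_mem_uIcc
      have hd : 0 ≤ 1 - Real.cos (n * x) := by linarith [Real.cos_le_one (n * x)]
      positivity
    simp only [hv, sub_self, zero_div, mul_zero]
    linarith
end

section
/- For an integer n ≥ 1, define f_n(x) = ∫_0^x sin(ns)/(2·sin(s)) ds (the integrand being extended continuously by the value n/2 at s = 0). Then for every integer n ≥ 4 and every x ∈ [π/n, π/2], one has f_n(x) ≥ 1/2. -/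
open Real intervalIntegral

/-- A function whose derivative is nonnegative on an interval grows along it. -/
lemma le_of_hasDerivAt_nonneg {f f' : ℝ → ℝ} {a b : ℝ} (hab : a ≤ b)
    (hd : ∀ y ∈ Set.Icc a b, HasDerivAt f (f' y) y)
    (h0 : ∀ y ∈ Set.Ioo a b, 0 ≤ f' y) : f a ≤ f b := by
  have := monotoneOn_of_hasDerivWithinAt_nonneg (convex_Icc a b) (f := f) (f' := f')
    (fun y hy ↦ (hd y hy).continuousAt.continuousWithinAt)
    (fun y hy ↦ (hd y (interior_subset hy)).hasDerivWithinAt)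
    (by intro y hy; rw [interior_Icc] at hy; exact h0 y hy)
  exact this (Set.left_mem_Icc.2 hab) (Set.right_mem_Icc.2 hab) hab

lemma cos_upper4 {x : ℝ} (hx : 0 ≤ x) : cos x ≤ 1 - x ^ 2 / 2 + x ^ 4 / 24 := by
  have := le_of_hasDerivAt_nonneg (f := fun y => 1 - y ^ 2 / 2 + y ^ 4 / 24 - cos y)
    (f' := fun y => sin y - (y - y ^ 3 / 6)) hx
    (fun y _ => by
      have := (((hasDerivAt_const y (1:ℝ)).sub ((hasDerivAt_pow 2 y).div_const 2)).add
        ((hasDerivAt_pow 4 y).div_const 24)).sub (hasDerivAt_cos y)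
      convert! this using 1
      norm_num; ring)
    (fun y hy => by have := sin_ge_sub_cube hy.1.le; linarith)
  norm_num at this; linarith

lemma sin_upper5 {x : ℝ} (hx : 0 ≤ x) : sin x ≤ x - x ^ 3 / 6 + x ^ 5 / 120 := by
  have := le_of_hasDerivAt_nonneg (f := fun y => y - y ^ 3 / 6 + y ^ 5 / 120 - sin y)
    (f' := fun y => 1 - y ^ 2 / 2 + y ^ 4 / 24 - cos y) hx
    (fun y _ => by
      have := (((hasDerivAt_id' y).sub ((hasDerivAt_pow 3 y).div_const 6)).add
        ((hasDerivAt_pow 5 y).div_const 120)).sub (hasDerivAt_sin y)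
      convert! this using 1
      norm_num; ring)
    (fun y hy => by have := cos_upper4 hy.1.le; linarith)
  norm_num at this; linarith

lemma cos_lower6 {x : ℝ} (hx : 0 ≤ x) : 1 - x ^ 2 / 2 + x ^ 4 / 24 - x ^ 6 / 720 ≤ cos x := by
  have := le_of_hasDerivAt_nonneg
    (f := fun y => cos y - (1 - y ^ 2 / 2 + y ^ 4 / 24 - y ^ 6 / 720))
    (f' := fun y => y - y ^ 3 / 6 + y ^ 5 / 120 - sin y) hx
    (fun y _ => by
      have := (hasDerivAt_cos y).sub ((((hasDerivAt_const y (1:ℝ)).sub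
        ((hasDerivAt_pow 2 y).div_const 2)).add
        ((hasDerivAt_pow 4 y).div_const 24)).sub ((hasDerivAt_pow 6 y).div_const 720))
      convert! this using 1
      norm_num; ring)
    (fun y hy => by have := sin_upper5 hy.1.le; linarith)
  norm_num at this; linarith

lemma sin_lower7 {x : ℝ} (hx : 0 ≤ x) : x - x ^ 3 / 6 + x ^ 5 / 120 - x ^ 7 / 5040 ≤ sin x := by
  have := le_of_hasDerivAt_nonneg
    (f := fun y => sin y - (y - y ^ 3 / 6 + y ^ 5 / 120 - y ^ 7 / 5040))
    (f' := fun y => cos y - (1 - y ^ 2 / 2 + y ^ 4 / 24 - y ^ 6 / 720)) hx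
    (fun y _ => by
      have := (hasDerivAt_sin y).sub ((((hasDerivAt_id' y).sub
        ((hasDerivAt_pow 3 y).div_const 6)).add
        ((hasDerivAt_pow 5 y).div_const 120)).sub ((hasDerivAt_pow 7 y).div_const 5040))
      convert! this using 1
      norm_num; ring)
    (fun y hy => by have := cos_lower6 hy.1.le; linarith)
  norm_num at this; linarith

/-- The continuous extension of the integrand. -/
noncomputable def kern (n : ℕ) (s : ℝ) : ℝ :=
  (Polynomial.Chebyshev.U ℝ ((n : ℤ) - 1)).eval (cos s) / 2

lemma kern_cont (n : ℕ) : Continuous (kern n) := by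
  unfold kern
  exact ((Polynomial.continuous _).comp continuous_cos).div_const 2

lemma kern_eq (n : ℕ) {s : ℝ} (hs : 0 < s) (hs' : s < π) :
    kern n s = sin (n * s) / (2 * sin s) := by
  have h := sin_pos_of_pos_of_lt_pi hs hs'
  have := Polynomial.Chebyshev.U_real_cos s ((n : ℤ) - 1)
  push_cast at this
  rw [sub_add_cancel] at this
  rw [← this, kern]
  field_simp

lemma f_eq (n : ℕ) {x : ℝ} (hx : 0 ≤ x) (hx' : x ≤ π) :
    fIntitem n x = ∫ s in (0:ℝ)..x, kern n s := by
  unfold fIntitem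
  refine integral_congr_Ioo_of_le hx fun s hs => ?_
  exact (kern_eq n hs.1 (hs.2.trans_le hx')).symm

lemma f_deriv (n : ℕ) (x : ℝ) :
    HasDerivAt (fun x => ∫ s in (0:ℝ)..x, kern n s) (kern n x) x :=
  (kern_cont n).integral_hasStrictDerivAt 0 x |>.hasDerivAt

/-- Lower bound for the first lobe. -/
lemma first_lobe (n : ℕ) (hn : 4 ≤ n) :
    (π - π ^ 3 / 18 + π ^ 5 / 600 - π ^ 7 / 35280) / 2 ≤ ∫ s in (0:ℝ)..(π / n), kern n s := by
  have hn0 : (0:ℝ) < n := by positivity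
  have hn4 : (4:ℝ) ≤ n := by exact_mod_cast hn
  have hpi := pi_pos
  have := le_of_hasDerivAt_nonneg (a := 0) (b := π / n)
    (f := fun y => (∫ s in (0:ℝ)..y, kern n s) -
      ((n * y) - (n * y) ^ 3 / 18 + (n * y) ^ 5 / 600 - (n * y) ^ 7 / 35280) / 2)
    (f' := fun y => kern n y -
      n * (1 - (n * y) ^ 2 / 6 + (n * y) ^ 4 / 120 - (n * y) ^ 6 / 5040) / 2)
    (by positivity)
    (fun y _ => by
      have hl : HasDerivAt (fun y : ℝ => n * y) (n * 1 : ℝ) y := (hasDerivAt_id' y).const_mul _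
      have := (f_deriv n y).sub ((((hl.sub ((hl.pow 3).div_const 18)).add
        ((hl.pow 5).div_const 600)).sub ((hl.pow 7).div_const 35280)).div_const 2)
      convert! this using 1
      norm_num; ring)
    (fun y hy => by
      obtain ⟨h0, h1⟩ := hy
      have h2 : n * y < π := by rw [lt_div_iff₀ hn0] at h1; linarith
      have h3 : y < π := by nlinarith
      have hs := sin_pos_of_pos_of_lt_pi h0 h3
      have hsn : 0 < sin (n * y) := sin_pos_of_pos_of_lt_pi (by positivity) h2
      have h7 := sin_lower7 (x := n * y) (by positivity)
      rw [kern_eq n h0 h3, sub_nonneg]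
      calc _ = (n * y - (n * y) ^ 3 / 6 + (n * y) ^ 5 / 120 - (n * y) ^ 7 / 5040) / (2 * y) := by
              field_simp
        _ ≤ sin (n * y) / (2 * y) := by gcongr
        _ ≤ _ := by
              have := sin_le h0.le
              gcongr)
  have e : (n:ℝ) * (π / n) = π := by field_simp
  simp only [e] at this
  norm_num at this
  linarith

/-- Integration by parts in the form of a monotonicity statement. -/
lemma by_parts (n : ℕ) (hn : 4 ≤ n) {x : ℝ} (h1 : π / n ≤ x) (h2 : x ≤ π / 2) :
    (∫ s in (0:ℝ)..(π / n), kern n s) - 1 / (n * sin (π / n)) ≤ ∫ s in (0:ℝ)..x, kern n s := by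
  have hn0 : (0:ℝ) < n := by positivity
  have hpi := pi_pos
  have hpn : 0 < π / n := by positivity
  have := le_of_hasDerivAt_nonneg (a := π / n) (b := x)
    (f := fun y => (∫ s in (0:ℝ)..y, kern n s) - (1 - cos (n * y)) / (2 * n * sin y))
    (f' := fun y => (1 - cos (n * y)) * cos y / (2 * n * sin y ^ 2)) h1
    (fun y hy => by
      have hy0 : 0 < y := hpn.trans_le hy.1
      have hy1 : y < π := by linarith [hy.2]
      have hs := sin_pos_of_pos_of_lt_pi hy0 hy1
      have hl : HasDerivAt (fun y : ℝ => n * y) (n * 1 : ℝ) y := (hasDerivAt_id' y).const_mul _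
      have := (f_deriv n y).sub (((hasDerivAt_const y (1:ℝ)).sub hl.cos).div
        ((hasDerivAt_sin y).const_mul (2 * n : ℝ)) (by positivity))
      convert! this using 1
      rw [kern_eq n hy0 hy1]
      simp only [Pi.sub_apply]
      field_simp
      ring)
    (fun y hy => by
      have hc : 0 ≤ cos y := cos_nonneg_of_neg_pi_div_two_le_of_le
        (by linarith [hy.1]) (by linarith [hy.2])
      have := cos_le_one (n * y)
      have : 0 ≤ 1 - cos (n * y) := by linarith
      positivity)
  have e : (n:ℝ) * (π / n) = π := by field_simp
  simp only [e, cos_pi] at this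
  have hs : 0 < sin x := sin_pos_of_pos_of_lt_pi (hpn.trans_le h1) (by linarith)
  have h3 : 0 ≤ (1 - cos (n * x)) / (2 * n * sin x) := by
    have : 0 ≤ 1 - cos (n * x) := by linarith [cos_le_one (n * x)]
    positivity
  have h4 : (1 - -1) / (2 * n * sin (π / n)) = 1 / (n * sin (π / n)) := by
    rw [mul_assoc]
    rw [show (1 - -1 : ℝ) = 2 * 1 by norm_num, mul_div_mul_left _ _ two_ne_zero]
  rw [h4] at this
  linarith

theorem fn_ge_half (n : ℕ) (hn : 4 ≤ n)
    (x : ℝ) (hx : x ∈ Set.Icc (Real.pi / n) (Real.pi / 2)) :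
    fIntitem n x ≥ 1 / 2 := by
  have hn0 : (0:ℝ) < n := by positivity
  have hn4 : (4:ℝ) ≤ n := by exact_mod_cast hn
  have hpi := pi_pos
  have hpn : 0 < π / n := by positivity
  have p1 := pi_gt_d4
  have p2 := pi_lt_d4
  rw [f_eq n (hpn.le.trans hx.1) (by linarith [hx.2])]
  have h1 := first_lobe n hn
  have h2 := by_parts n hn hx.1 hx.2
  -- lower bound for `n * sin (π / n)`
  have h3 : 2.8 ≤ n * sin (π / n) := by
    have h := sin_ge_sub_cube hpn.le
    have h5 : n * (π / n - (π / n) ^ 3 / 6) ≤ n * sin (π / n) := by gcongr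
    have e : n * (π / n - (π / n) ^ 3 / 6) = π - π ^ 3 / (6 * n ^ 2) := by field_simp
    have h6 : π ^ 3 / (6 * n ^ 2) ≤ 3.1416 ^ 3 / (6 * 4 ^ 2) := by gcongr
    norm_num at h6 p1 ⊢
    linarith
  have h4 : 1 / (n * sin (π / n)) ≤ 1 / 2.8 := by gcongr
  have q3 : π ^ 3 ≤ 3.1416 ^ 3 := by gcongr
  have q5 : 3.1415 ^ 5 ≤ π ^ 5 := by gcongr
  have q7 : π ^ 7 ≤ 3.1416 ^ 7 := by gcongr
  norm_num at *
  linarith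
end

section
/- For an integer n ≥ 1, define h_n(x) = (−1)^{n+1} · ∫_0^x cos((2n+1)s/2)/(2·cos(s/2)) ds. Then for every integer n ≥ 21 and every x ∈ [π/n, π − π/n], one has h_n(x) ≤ 0.18·x. -/
open Real intervalIntegral

noncomputable def hOsc (n : ℕ) (x : ℝ) : ℝ :=
  (-1 : ℝ) ^ (n + 1) *
    ∫ s in (0:ℝ)..x, Real.cos ((2 * n + 1) * s / 2) / (2 * Real.cos (s / 2))

lemma aux_deriv (e a s : ℝ) (ha : 0 < a) (hc : 0 < Real.cos (s / 2)) :
    HasDerivAt (fun s : ℝ => e * (Real.sin (a * s) / (2 * Real.cos (s / 2)) / a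
      + Real.cos (a * s) * (Real.sin (s / 2) / (4 * Real.cos (s / 2) ^ 2)) / a ^ 2)
      + Real.sin (s / 2) / (4 * Real.cos (s / 2) ^ 2) / a ^ 2)
      (e * (Real.cos (a * s) / (2 * Real.cos (s / 2)))
        + (1 + e * Real.cos (a * s)) *
          ((1 / (8 * Real.cos (s / 2)) + Real.sin (s / 2) ^ 2 / (4 * Real.cos (s / 2) ^ 3)) / a ^ 2)) s := by
  have h2 : HasDerivAt (fun s : ℝ => s / 2) (1 / 2) s := (hasDerivAt_id s).div_const 2
  have hm : HasDerivAt (fun s : ℝ => a * s) (a * 1) s := (hasDerivAt_id s).const_mul a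
  have hS := h2.sin
  have hC := h2.cos
  have hSa := hm.sin
  have hCa := hm.cos
  have hg' := hS.div ((hC.pow 2).const_mul 4) (by simp only [Pi.pow_apply]; positivity)
  have hg := (hSa.div (hC.const_mul 2) (by positivity)).div_const a
  have hh := (((hg.add ((hCa.mul hg').div_const (a ^ 2))).const_mul e).add (hg'.div_const (a ^ 2)))
  refine hh.congr_deriv ?_
  simp only [Pi.pow_apply, Pi.div_apply]
  field_simp
  ring

lemma aux_bound (e a x : ℝ) (he : |e| ≤ 1) (ha : 0 < a) (hx0 : 0 ≤ x) (hx : x < π) :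
    e * ∫ s in (0:ℝ)..x, Real.cos (a * s) / (2 * Real.cos (s / 2)) ≤
      1 / (a * Real.cos (x / 2)) / 2 + (1 / (a * Real.cos (x / 2))) ^ 2 / 2 := by
  have hpos : ∀ s ∈ Set.uIcc 0 x, 0 < Real.cos (s / 2) := by
    intro s hs
    rw [Set.uIcc_of_le hx0] at hs
    apply Real.cos_pos_of_mem_Ioo
    constructor <;> linarith [hs.1, hs.2, Real.pi_pos]
  have hc1 : ContinuousOn (fun s : ℝ => e * (Real.cos (a * s) / (2 * Real.cos (s / 2)))) (Set.uIcc 0 x) := by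
    refine ContinuousOn.mul (by fun_prop) (ContinuousOn.div (by fun_prop) (by fun_prop) ?_)
    intro s hs; have := hpos s hs; positivity
  have hc2 : ContinuousOn (fun s : ℝ => (1 + e * Real.cos (a * s)) *
          ((1 / (8 * Real.cos (s / 2)) + Real.sin (s / 2) ^ 2 / (4 * Real.cos (s / 2) ^ 3)) / a ^ 2)) (Set.uIcc 0 x) := by
    refine ContinuousOn.mul (by fun_prop) (ContinuousOn.div_const (ContinuousOn.add
      (ContinuousOn.div (by fun_prop) (by fun_prop) ?_) (ContinuousOn.div (by fun_prop) (by fun_prop) ?_)) _) <;>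
    · intro s hs; have := hpos s hs; positivity
  have hec : ∀ t, |e * Real.cos t| ≤ 1 := by
    intro t; rw [abs_mul]
    exact mul_le_one₀ he (abs_nonneg _) (Real.abs_cos_le_one t)
  have hes : ∀ t, |e * Real.sin t| ≤ 1 := by
    intro t; rw [abs_mul]
    exact mul_le_one₀ he (abs_nonneg _) (Real.abs_sin_le_one t)
  have hF := integral_eq_sub_of_hasDerivAt
    (fun s hs => aux_deriv e a s ha (hpos s hs)) ((hc1.add hc2).intervalIntegrable)
  have hle : (∫ s in (0:ℝ)..x, e * (Real.cos (a * s) / (2 * Real.cos (s / 2)))) ≤ _ :=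
    (integral_mono_on hx0 hc1.intervalIntegrable ((hc1.add hc2).intervalIntegrable) (by
    intro s hs
    have h1 := hpos s (by rwa [Set.uIcc_of_le hx0])
    have h2 := (abs_le.1 (hec (a * s))).1
    simp only [Pi.add_apply]
    have : 0 ≤ (1 + e * Real.cos (a * s)) * ((1 / (8 * Real.cos (s / 2)) + Real.sin (s / 2) ^ 2 / (4 * Real.cos (s / 2) ^ 3)) / a ^ 2) := by
      apply mul_nonneg (by linarith) (by positivity)
    linarith)).trans_eq hF
  rw [integral_const_mul] at hle
  refine hle.trans ?_
  have hC := hpos x Set.right_mem_uIcc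
  simp only [mul_zero, zero_div, Real.sin_zero, Real.cos_zero, add_zero, sub_zero]
  set C := Real.cos (x / 2)
  have hS := Real.sin_le_one (x / 2)
  have hS0 : 0 ≤ Real.sin (x / 2) := Real.sin_nonneg_of_nonneg_of_le_pi (by linarith) (by linarith)
  set S := Real.sin (x / 2)
  have e1 := (abs_le.1 (hes (a * x))).2
  have e2 := (abs_le.1 (hec (a * x))).2
  have hP : 0 ≤ 1 / (a * C) / 2 := by positivity
  have hQ : 0 ≤ (1 / (a * C)) ^ 2 / 4 := by positivity
  have e3 := mul_le_mul_of_nonneg_right e1 hP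
  have e4 : (e * Real.cos (a * x) + 1) * S ≤ 2 := by nlinarith
  have e5 := mul_le_mul_of_nonneg_right e4 hQ
  have : e * (Real.sin (a * x) / (2 * C) / a + Real.cos (a * x) * (S / (4 * C ^ 2)) / a ^ 2) + S / (4 * C ^ 2) / a ^ 2
     = e * Real.sin (a * x) * (1 / (a * C) / 2) + (e * Real.cos (a * x) + 1) * S * ((1 / (a * C)) ^ 2 / 4) := by
    field_simp
    ring
  rw [this]
  linarith

lemma aux_low (n : ℝ) (hn : 21 ≤ n) :
    1 / ((n + 1 / 2) * Real.cos (π / n / 2)) / 2 + (1 / ((n + 1 / 2) * Real.cos (π / n / 2))) ^ 2 / 2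
      ≤ 0.18 * (π / n) := by
  have hp1 := Real.pi_gt_d4
  have hp2 := Real.pi_lt_d4
  have ht : π / n / 2 ≤ 0.075 := by
    rw [div_div, div_le_iff₀ (by linarith)]; linarith
  have ht0 : 0 ≤ π / n / 2 := by positivity
  have hcos : 0.997 ≤ Real.cos (π / n / 2) := by
    have := Real.one_sub_sq_div_two_le_cos (x := π / n / 2)
    nlinarith
  have hu : 1 / ((n + 1 / 2) * Real.cos (π / n / 2)) ≤ 1.0031 / n := by
    rw [div_le_div_iff₀ (by positivity) (by linarith)]
    nlinarith
  have hu0 : 0 ≤ 1 / ((n + 1 / 2) * Real.cos (π / n / 2)) := by positivity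
  set u := 1 / ((n + 1 / 2) * Real.cos (π / n / 2))
  have hn' : 1.0031 / n ≤ 0.048 := by
    rw [div_le_iff₀ (by linarith)]; linarith
  have h1 : u / 2 + u ^ 2 / 2 ≤ 0.524 * (1.0031 / n) := by nlinarith
  refine h1.trans ?_
  rw [← mul_div_assoc, ← mul_div_assoc]
  apply div_le_div_of_nonneg_right _ (by linarith)
  linarith

lemma aux_high (n : ℝ) (hn : 21 ≤ n) :
    1 / ((n + 1 / 2) * Real.cos ((π - π / n) / 2)) / 2
      + (1 / ((n + 1 / 2) * Real.cos ((π - π / n) / 2))) ^ 2 / 2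
      ≤ 0.18 * (π - π / n) := by
  have hp1 := Real.pi_gt_d4
  have hp2 := Real.pi_lt_d4
  have h0 : (π - π / n) / 2 = π / 2 - π / n / 2 := by ring
  have ht : π / n / 2 ≤ 0.075 := by
    rw [div_div, div_le_iff₀ (by linarith)]; linarith
  have ht0 : 0 < π / n / 2 := by positivity
  have hnt : n * (π / n / 2) = π / 2 := by field_simp
  have hr : π - π / n ≥ π * (20 / 21) := by
    have : π / n ≤ π / 21 := by gcongr
    linarith
  rw [h0, Real.cos_pi_div_two_sub]
  have hs := Real.sin_gt_sub_cube ht0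
  set t := π / n / 2
  have hs2 : 0.99 * t ≤ Real.sin t := by nlinarith [mul_nonneg ht0.le ht0.le]
  have hA : 1.54 ≤ (n + 1 / 2) * Real.sin t := by nlinarith
  have hu : 1 / ((n + 1 / 2) * Real.sin t) ≤ 0.65 := by
    rw [div_le_iff₀ (by linarith)]; linarith
  have hu0 : 0 ≤ 1 / ((n + 1 / 2) * Real.sin t) := by
    apply div_nonneg <;> linarith
  set u := 1 / ((n + 1 / 2) * Real.sin t)
  nlinarith

theorem hn_bound (n : ℕ) (hn : 21 ≤ n)
    (x : ℝ) (hx : x ∈ Set.Icc (Real.pi / n) (Real.pi - Real.pi / n)) :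
    hOsc n x ≤ 0.18 * x := by
  have hn' : (21 : ℝ) ≤ n := by exact_mod_cast hn
  have hlow := aux_low n hn'
  have hhigh := aux_high n hn'
  have hpn : 0 < π / n := by positivity
  have hpn' : π / n ≤ π / 21 := by gcongr
  have hpi := Real.pi_pos
  obtain ⟨hx1, hx2⟩ := hx
  have hb := aux_bound ((-1 : ℝ) ^ (n + 1)) ((n : ℝ) + 1 / 2) x (by simp [abs_pow]) (by positivity)
    (by linarith) (by linarith)
  have heq : hOsc n x = (-1 : ℝ) ^ (n + 1) *
      ∫ s in (0:ℝ)..x, Real.cos (((n : ℝ) + 1 / 2) * s) / (2 * Real.cos (s / 2)) := by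
    unfold hOsc
    congr 2
    funext s
    congr 2
    ring
  rw [heq]
  refine hb.trans ?_
  have ha : (0 : ℝ) < n + 1 / 2 := by positivity
  generalize hadef : (n : ℝ) + 1 / 2 = a at *
  generalize hp : π / n = p at *
  obtain ⟨l, m, hl, hm, hlm, hxe⟩ : x ∈ segment ℝ p (π - p) := by
    rw [segment_eq_Icc (by linarith)]; exact ⟨hx1, hx2⟩
  simp only [smul_eq_mul] at hxe
  have hconc := strictConcaveOn_cos_Icc.concaveOn.2
    (x := p / 2) (y := (π - p) / 2) ⟨by linarith, by linarith⟩ ⟨by linarith, by linarith⟩ hl hm hlm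
  simp only [smul_eq_mul] at hconc
  rw [show l * (p / 2) + m * ((π - p) / 2) = x / 2 by rw [← hxe]; ring] at hconc
  have hA : 0 < Real.cos (p / 2) :=
    Real.cos_pos_of_mem_Ioo ⟨by linarith, by linarith⟩
  have hB : 0 < Real.cos ((π - p) / 2) :=
    Real.cos_pos_of_mem_Ioo ⟨by linarith, by linarith⟩
  have hZ : 0 < Real.cos (x / 2) :=
    Real.cos_pos_of_mem_Ioo ⟨by linarith, by linarith⟩
  generalize Real.cos (p / 2) = A at *
  generalize Real.cos ((π - p) / 2) = B at *
  generalize Real.cos (x / 2) = Z at *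
  have hu : 1 / (a * Z) ≤ l * (1 / (a * A)) + m * (1 / (a * B)) := by
    have : l * (1 / (a * A)) + m * (1 / (a * B)) = (l * B + m * A) / (a * A * B) := by
      field_simp
    rw [this, div_le_div_iff₀ (by positivity) (by positivity)]
    have h1 : A * B ≤ (l * B + m * A) * (l * A + m * B) := by
      have hm' : m = 1 - l := by linarith
      have : (l * B + m * A) * (l * A + m * B) - A * B = l * m * (A - B) ^ 2 := by
        subst hm'; ring
      have : 0 ≤ l * m * (A - B) ^ 2 := by positivity
      linarith
    have h2 : (l * B + m * A) * (l * A + m * B) ≤ (l * B + m * A) * Z := by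
      gcongr
    have := mul_le_mul_of_nonneg_left (h1.trans h2) ha.le
    linarith
  have hu0 : 0 ≤ 1 / (a * Z) := by positivity
  generalize 1 / (a * Z) = u at *
  generalize 1 / (a * A) = v at *
  generalize 1 / (a * B) = w at *
  have hsq : u ^ 2 ≤ l * v ^ 2 + m * w ^ 2 := by
    have h1 : u ^ 2 ≤ (l * v + m * w) ^ 2 := by gcongr
    have hm' : m = 1 - l := by linarith
    have : l * v ^ 2 + m * w ^ 2 - (l * v + m * w) ^ 2 = l * m * (v - w) ^ 2 := by
      subst hm'; ring
    have : 0 ≤ l * m * (v - w) ^ 2 := by positivity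
    linarith
  have k1 := mul_le_mul_of_nonneg_left hlow hl
  have k2 := mul_le_mul_of_nonneg_left hhigh hm
  rw [← hxe]
  linarith
end

section
/- There exists x ∈ [0, π] such that 2·sin(x) + sin(2x) + (4/3)·sin(3x) + sin(4x) + (6/5)·sin(5x) + (3/4)·sin(8x) < 0. -/
open Real

theorem belov_not_sufficient :
    ∃ x ∈ Set.Icc 0 Real.pi,
      2 * Real.sin x + Real.sin (2 * x) + (4 / 3) * Real.sin (3 * x)
        + Real.sin (4 * x) + (6 / 5) * Real.sin (5 * x)
        + (3 / 4) * Real.sin (8 * x) < 0 := by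
  refine ⟨Real.arccos (-3 / 5), ⟨Real.arccos_nonneg _, Real.arccos_le_pi _⟩, ?_⟩
  have hc : Real.cos (Real.arccos (-3 / 5)) = -3 / 5 :=
    Real.cos_arccos (by norm_num) (by norm_num)
  have hs : Real.sin (Real.arccos (-3 / 5)) = 4 / 5 := by
    rw [Real.sin_arccos, show (1 - (-3 / 5 : ℝ) ^ 2) = (4 / 5) ^ 2 by norm_num]
    exact Real.sqrt_sq (by norm_num)
  generalize Real.arccos (-3 / 5) = x at hc hs
  have s2 : Real.sin (2 * x) = -24 / 25 := by rw [Real.sin_two_mul, hc, hs]; norm_num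
  have c2 : Real.cos (2 * x) = -7 / 25 := by rw [Real.cos_two_mul, hc]; norm_num
  have s3 : Real.sin (3 * x) = 44 / 125 := by rw [Real.sin_three_mul, hs]; norm_num
  have s4 : Real.sin (4 * x) = 336 / 625 := by
    rw [show 4 * x = 2 * (2 * x) by ring, Real.sin_two_mul, s2, c2]; norm_num
  have c4 : Real.cos (4 * x) = -527 / 625 := by
    rw [show 4 * x = 2 * (2 * x) by ring, Real.cos_two_mul, c2]; norm_num
  have s5 : Real.sin (5 * x) = -3116 / 3125 := by
    rw [show 5 * x = 4 * x + x by ring, Real.sin_add, s4, c4, hs, hc]; norm_num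
  have s8 : Real.sin (8 * x) = -354144 / 390625 := by
    rw [show 8 * x = 2 * (4 * x) by ring, Real.sin_two_mul, s4, c4]; norm_num
  rw [hs, s2, s3, s4, s5, s8]; norm_num
end
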